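/- arXiv:1805.06434 — 2 statements merged into one kernel-verified Lean document; each statement's English description precedes it below -/
import Mathlib

section
/- Let p ≥ 1, s ∈ (0,1), ps ≠ 1, α = (ps-1)/p, and fix x_d > 0. Then lim_{ε→0⁺} ∫_{{y_d > 0 : |y_d - x_d| > ε}} (y_d^α - x_d^α)|y_d^α - x_d^α|^{p-2} / |y_d - x_d|^{ps+1} dy_d = - x_d^{α(p-1) - ps} ∫_0^1 |t^α - 1|^p / |t-1|^{ps+1} dt, and the integral σ = ∫_0^1 |t^α-1|^p/|t-1|^{ps+1} dt is a finite positive number. -/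
open MeasureTheory Real Filter

lemma integrableOn_rpow_mul_one_sub_rpow {a b : ℝ} (ha : -1 < a) (hb : -1 < b) :
    IntegrableOn (fun t : ℝ => t ^ a * (1 - t) ^ b) (Set.Ioo 0 1) := by
  have h := Complex.betaIntegral_convergent (u := ((a + 1 : ℝ) : ℂ)) (v := ((b + 1 : ℝ) : ℂ))
    (by rw [Complex.ofReal_re]; linarith) (by rw [Complex.ofReal_re]; linarith)
  rw [intervalIntegrable_iff_integrableOn_Ioo_of_le zero_le_one] at h
  refine IntegrableOn.congr_fun h.norm (fun t ht => ?_) measurableSet_Ioo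
  have h1 : 0 < 1 - t := sub_pos.2 ht.2
  have h2 : (1 - (t : ℂ)) = ((1 - t : ℝ) : ℂ) := by push_cast; rfl
  simp only [norm_mul]
  rw [h2, Complex.norm_cpow_eq_rpow_re_of_pos ht.1, Complex.norm_cpow_eq_rpow_re_of_pos h1]
  simp

lemma abs_rpow_sub_one_le {a t : ℝ} (ha : |a| ≤ 1) (ht : t ∈ Set.Ioo (0 : ℝ) 1) :
    |t ^ a - 1| ≤ max 1 (t ^ a) * (1 - t) := by
  obtain ⟨h0, h1⟩ := ht
  obtain ⟨ha1, ha2⟩ := abs_le.1 ha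
  rcases le_total 0 a with h | h
  · have e1 : t ^ a ≤ 1 := rpow_le_one h0.le h1.le h
    have e2 : t ≤ t ^ a := by simpa using rpow_le_rpow_of_exponent_ge h0 h1.le ha2
    rw [max_eq_left e1, abs_of_nonpos (by linarith)]
    linarith
  · have e1 : 1 ≤ t ^ a := one_le_rpow_of_pos_of_le_one_of_nonpos h0 h1.le h
    have e2 : t ≤ t ^ (-a) := by
      simpa using rpow_le_rpow_of_exponent_ge h0 h1.le (by linarith : -a ≤ 1)
    rw [max_eq_right e1, abs_of_nonneg (by linarith)]
    have e3 : t ^ a * t ^ (-a) = 1 := by rw [← rpow_add h0]; simp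
    nlinarith

lemma abs_rpow_sub_one_rpow_le {a q t : ℝ} (ha : |a| ≤ 1) (hq : 0 ≤ q)
    (ht : t ∈ Set.Ioo (0 : ℝ) 1) :
    |t ^ a - 1| ^ q ≤ (1 + t ^ (a * q)) * (1 - t) ^ q := by
  have h1 : 0 < 1 - t := sub_pos.2 ht.2
  refine (rpow_le_rpow (abs_nonneg _) (abs_rpow_sub_one_le ha ht) hq).trans ?_
  rw [mul_rpow (by positivity) h1.le, rpow_mul ht.1.le]
  gcongr
  rcases max_choice 1 (t ^ a) with h | h <;> rw [h]
  · simpa using rpow_nonneg (rpow_nonneg ht.1.le _) _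
  · simp

lemma abs_rpow_sub_one_rpow_div_le {a q r t : ℝ} (ha : |a| ≤ 1) (hq : 0 ≤ q)
    (ht : t ∈ Set.Ioo (0 : ℝ) 1) :
    |t ^ a - 1| ^ q / |t - 1| ^ r ≤ (1 + t ^ (a * q)) * (1 - t) ^ (q - r) := by
  have h1 : 0 < 1 - t := sub_pos.2 ht.2
  rw [abs_sub_comm t 1, abs_of_pos h1, rpow_sub h1, ← mul_div_assoc]
  gcongr
  exact abs_rpow_sub_one_rpow_le ha hq ht

lemma integrableOn_abs_rpow_sub_one_rpow_div {a q r : ℝ} (ha : |a| ≤ 1) (hq : 0 ≤ q)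
    (haq : -1 < a * q) (hqr : -1 < q - r) :
    IntegrableOn (fun t : ℝ => |t ^ a - 1| ^ q / |t - 1| ^ r) (Set.Ioo 0 1) := by
  have h := (integrableOn_rpow_mul_one_sub_rpow (neg_one_lt_zero) hqr).add
    (integrableOn_rpow_mul_one_sub_rpow haq hqr)
  refine Integrable.mono' h (Measurable.aestronglyMeasurable (by fun_prop)) ?_
  filter_upwards [ae_restrict_mem measurableSet_Ioo] with t ht
  rw [norm_of_nonneg (by positivity)]
  simpa [add_mul] using abs_rpow_sub_one_rpow_div_le (r := r) ha hq ht

lemma rpow_ne_one_of_mem_Ioo {a t : ℝ} (ha : a ≠ 0) (ht : t ∈ Set.Ioo (0 : ℝ) 1) :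
    t ^ a ≠ 1 := by
  rw [← one_rpow a]
  exact fun h => ht.2.ne ((rpow_left_inj ht.1.le zero_le_one ha).1 h)

/-- The kernel of the one-dimensional nonlocal operator applied to `t ↦ t ^ a` at the point `x`. -/
noncomputable def groundKernel (p r a x t : ℝ) : ℝ :=
  (t ^ a - x ^ a) * |t ^ a - x ^ a| ^ (p - 2) / |t - x| ^ r

lemma measurable_groundKernel (p r a x : ℝ) : Measurable (groundKernel p r a x) := by
  unfold groundKernel
  fun_prop

lemma groundKernel_mul_left {p r a x t : ℝ} (hx : 0 < x) (ht : 0 < t) :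
    groundKernel p r a x (x * t) = x ^ (a * (p - 1) - r) * groundKernel p r a 1 t := by
  have e1 : x * t - x = x * (t - 1) := by ring
  have e2 : (x * t) ^ a - x ^ a = x ^ a * (t ^ a - 1) := by rw [mul_rpow hx.le ht.le]; ring
  have e3 : a * (p - 1) = a + a * (p - 2) := by ring
  unfold groundKernel
  rw [one_rpow, e1, e2, abs_mul, abs_mul, abs_of_pos hx, abs_of_pos (rpow_pos_of_pos hx a),
    mul_rpow hx.le (abs_nonneg _), mul_rpow (rpow_nonneg hx.le a) (abs_nonneg _), ← rpow_mul hx.le,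
    rpow_sub hx, e3, rpow_add hx]
  field_simp

lemma groundKernel_one_mul_rpow {p r a t : ℝ} (ha : a ≠ 0) (ht : t ∈ Set.Ioo (0 : ℝ) 1) :
    groundKernel p r a 1 t * t ^ a
      = groundKernel p r a 1 t + |t ^ a - 1| ^ p / |t - 1| ^ r := by
  have h0 : 0 < |t ^ a - 1| := abs_pos.2 (sub_ne_zero.2 (rpow_ne_one_of_mem_Ioo ha ht))
  have e : |t ^ a - 1| ^ p = (t ^ a - 1) * (t ^ a - 1) * |t ^ a - 1| ^ (p - 2) := by
    rw [← abs_mul_abs_self, ← pow_two, ← rpow_natCast, ← rpow_add h0]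
    norm_num
  unfold groundKernel
  rw [one_rpow, e]
  ring

lemma abs_groundKernel_one {p r a t : ℝ} (ha : a ≠ 0) (ht : t ∈ Set.Ioo (0 : ℝ) 1) :
    |groundKernel p r a 1 t| = |t ^ a - 1| ^ (p - 1) / |t - 1| ^ r := by
  have h0 : 0 < |t ^ a - 1| := abs_pos.2 (sub_ne_zero.2 (rpow_ne_one_of_mem_Ioo ha ht))
  unfold groundKernel
  rw [one_rpow, abs_div, abs_mul, abs_of_nonneg (rpow_nonneg (abs_nonneg (t ^ a - 1)) _),
    abs_of_nonneg (rpow_nonneg (abs_nonneg (t - 1)) _)]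
  congr 1
  nth_rewrite 1 [← rpow_one |t ^ a - 1|]
  rw [← rpow_add h0]
  congr 1
  ring

lemma integrableOn_groundKernel_one {p r a δ : ℝ} (hp : 1 ≤ p) (ha : |a| ≤ 1) (ha0 : a ≠ 0)
    (hap : -1 < a * (p - 1)) (hδ : 0 < δ) :
    IntegrableOn (groundKernel p r a 1) (Set.Ioo 0 (1 - δ)) := by
  rcases le_or_gt 1 δ with h1 | h1
  · rw [Set.Ioo_eq_empty (by linarith)]; exact integrableOn_empty
  have h : IntegrableOn (fun t : ℝ => (t ^ (0 : ℝ) + t ^ (a * (p - 1))) *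
      (1 + δ ^ (p - 1 - r))) (Set.Ioo 0 (1 - δ)) := by
    refine Integrable.mul_const (Integrable.add ?_ ?_) _
    · exact (intervalIntegral.integrableOn_Ioo_rpow_iff (sub_pos.2 h1)).2 neg_one_lt_zero
    · exact (intervalIntegral.integrableOn_Ioo_rpow_iff (sub_pos.2 h1)).2 hap
  refine Integrable.mono' h (measurable_groundKernel _ _ _ _).aestronglyMeasurable ?_
  filter_upwards [ae_restrict_mem measurableSet_Ioo] with t ht
  have ht' : t ∈ Set.Ioo (0 : ℝ) 1 := ⟨ht.1, by linarith [ht.2]⟩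
  have h2 : 0 < 1 - t := sub_pos.2 ht'.2
  have h3 : 0 < t ^ (a * (p - 1)) := rpow_pos_of_pos ht.1 _
  rw [norm_eq_abs, abs_groundKernel_one ha0 ht', rpow_zero]
  refine (abs_rpow_sub_one_rpow_div_le ha (by linarith) ht').trans ?_
  gcongr
  rcases le_total 0 (p - 1 - r) with h | h
  · have := rpow_le_one h2.le (by linarith [ht.1]) h
    have := rpow_pos_of_pos hδ (p - 1 - r)
    linarith
  · have := rpow_le_rpow_of_nonpos hδ (by linarith [ht.2]) h (x := δ) (y := 1 - t)
    linarith

lemma groundKernel_one_inv {p r a u : ℝ} (hr : a * p = r - 2) (hu : 0 < u) :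
    |-(u ^ 2)⁻¹| • groundKernel p r a 1 u⁻¹ = -(groundKernel p r a 1 u * u ^ a) := by
  have hc : 0 < u ^ a := rpow_pos_of_pos hu a
  have e1 : u⁻¹ - 1 = -(u - 1) * u⁻¹ := by field_simp; ring
  have e2 : u⁻¹ ^ a - 1 = -(u ^ a - 1) * (u ^ a)⁻¹ := by rw [inv_rpow hu.le]; field_simp; ring
  have e3 : u ^ r = u ^ (a * (p - 2)) * (u ^ a) ^ 2 * u ^ 2 := by
    rw [← rpow_natCast, ← rpow_natCast, ← rpow_mul hu.le, ← rpow_add hu, ← rpow_add hu]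
    congr 1; push_cast; linarith
  unfold groundKernel
  rw [one_rpow, e1, e2, abs_neg, smul_eq_mul, abs_mul, abs_mul, abs_neg, abs_neg,
    abs_of_pos (inv_pos.2 hc), abs_of_pos (inv_pos.2 hu), abs_of_pos (inv_pos.2 (pow_pos hu 2)),
    mul_rpow (abs_nonneg _) (inv_nonneg.2 hu.le), mul_rpow (abs_nonneg _) (inv_nonneg.2 hc.le),
    inv_rpow hc.le, inv_rpow hu.le, ← rpow_mul hu.le, e3]
  field_simp

lemma inv_image_Ioo_inv {b : ℝ} (hb : 0 < b) : Inv.inv '' Set.Ioo 0 b⁻¹ = Set.Ioi b := by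
  rw [Set.image_inv_eq_inv, Set.inv_Ioo_0_left (inv_pos.2 hb), inv_inv]

lemma hasDerivWithinAt_inv_Ioo {b : ℝ} :
    ∀ x ∈ Set.Ioo 0 b⁻¹, HasDerivWithinAt (Inv.inv : ℝ → ℝ) (-(x ^ 2)⁻¹) (Set.Ioo 0 b⁻¹) x :=
  fun _ hx => (hasDerivAt_inv hx.1.ne').hasDerivWithinAt

lemma setIntegral_groundKernel_one {p r a δ : ℝ} (hp : 1 ≤ p) (ha : |a| ≤ 1) (ha0 : a ≠ 0)
    (hap : -1 < a * (p - 1)) (hap' : -1 < a * p) (hpr : -1 < p - r) (hr : a * p = r - 2)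
    (hδ : δ ∈ Set.Ioo (0 : ℝ) 1) :
    ∫ t in {t : ℝ | 0 < t ∧ δ < |t - 1|}, groundKernel p r a 1 t
      = -((∫ t in Set.Ioo 0 (1 + δ)⁻¹, |t ^ a - 1| ^ p / |t - 1| ^ r)
        + ∫ t in Set.Ico (1 - δ) (1 + δ)⁻¹, groundKernel p r a 1 t) := by
  obtain ⟨h0, h1⟩ := hδ
  have hb : 0 < 1 + δ := by linarith
  have hb1 : (1 + δ)⁻¹ < 1 := inv_lt_one_of_one_lt₀ (by linarith)
  have hb2 : 1 - δ ≤ (1 + δ)⁻¹ := by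
    rw [← one_div, le_div_iff₀ hb]; nlinarith
  have hset : {t : ℝ | 0 < t ∧ δ < |t - 1|} = Set.Ioo 0 (1 - δ) ∪ Set.Ioi (1 + δ) := by
    ext t
    simp only [Set.mem_ofPred_eq, Set.mem_union, Set.mem_Ioo, Set.mem_Ioi, lt_abs]
    constructor
    · rintro ⟨h, h' | h'⟩
      · right; linarith
      · left; constructor <;> linarith
    · rintro (⟨h, h'⟩ | h)
      · exact ⟨h, Or.inr (by linarith)⟩
      · exact ⟨by linarith, Or.inl (by linarith)⟩
  have hg1 : IntegrableOn (groundKernel p r a 1) (Set.Ioo 0 (1 - δ)) :=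
    integrableOn_groundKernel_one hp ha ha0 hap h0
  have hg2 : IntegrableOn (groundKernel p r a 1) (Set.Ioo 0 (1 + δ)⁻¹) := by
    have := integrableOn_groundKernel_one (r := r) hp ha ha0 hap (sub_pos.2 hb1)
    rwa [sub_sub_cancel] at this
  have hh : IntegrableOn (fun t : ℝ => |t ^ a - 1| ^ p / |t - 1| ^ r) (Set.Ioo 0 (1 + δ)⁻¹) :=
    (integrableOn_abs_rpow_sub_one_rpow_div ha (by linarith) hap' hpr).mono_set
      (Set.Ioo_subset_Ioo_right hb1.le)
  have hinj : Set.InjOn (Inv.inv : ℝ → ℝ) (Set.Ioo 0 (1 + δ)⁻¹) := inv_injective.injOn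
  have hcongr : Set.EqOn (fun u => |-(u ^ 2)⁻¹| • groundKernel p r a 1 u⁻¹)
      (fun u => -(groundKernel p r a 1 u + |u ^ a - 1| ^ p / |u - 1| ^ r))
      (Set.Ioo 0 (1 + δ)⁻¹) := fun u hu => by
    simp only
    rw [groundKernel_one_inv hr hu.1, groundKernel_one_mul_rpow ha0 ⟨hu.1, hu.2.trans hb1⟩]
  have hg3 : IntegrableOn (groundKernel p r a 1) (Set.Ioi (1 + δ)) := by
    rw [← inv_image_Ioo_inv hb, integrableOn_image_iff_integrableOn_abs_deriv_smul
      measurableSet_Ioo hasDerivWithinAt_inv_Ioo hinj]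
    exact (integrableOn_congr_fun hcongr measurableSet_Ioo).2 (hg2.add hh).neg
  have hg4 : IntegrableOn (groundKernel p r a 1) (Set.Ico (1 - δ) (1 + δ)⁻¹) :=
    hg2.mono_set fun t ht => ⟨by linarith [ht.1], ht.2⟩
  have hI : ∫ t in Set.Ioi (1 + δ), groundKernel p r a 1 t
      = -((∫ t in Set.Ioo 0 (1 + δ)⁻¹, groundKernel p r a 1 t)
        + ∫ t in Set.Ioo 0 (1 + δ)⁻¹, |t ^ a - 1| ^ p / |t - 1| ^ r) := by
    rw [← inv_image_Ioo_inv hb, integral_image_eq_integral_abs_deriv_smul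
      measurableSet_Ioo hasDerivWithinAt_inv_Ioo hinj, setIntegral_congr_fun measurableSet_Ioo
      hcongr, integral_neg, integral_add hg2 hh]
  have hsplit : ∫ t in Set.Ioo 0 (1 + δ)⁻¹, groundKernel p r a 1 t
      = (∫ t in Set.Ioo 0 (1 - δ), groundKernel p r a 1 t)
        + ∫ t in Set.Ico (1 - δ) (1 + δ)⁻¹, groundKernel p r a 1 t := by
    rw [← setIntegral_union _ measurableSet_Ico hg1 hg4,
      Set.Ioo_union_Ico_eq_Ioo (sub_pos.2 h1) hb2]
    exact Set.disjoint_left.2 fun t h h' => h.2.not_ge h'.1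
  rw [hset, setIntegral_union _ measurableSet_Ioi hg1 hg3, hI, hsplit]
  · ring
  · exact Set.disjoint_left.2 fun t h h' => by
      have := h.2
      have : 1 + δ < t := h'
      linarith

lemma abs_setIntegral_groundKernel_one_le {p r a δ : ℝ} (hp : 1 ≤ p) (ha : |a| ≤ 1) (ha0 : a ≠ 0)
    (hpr : -1 < p - r) (hδ : δ ∈ Set.Ioo (0 : ℝ) (1 / 2)) :
    |∫ t in Set.Ico (1 - δ) (1 + δ)⁻¹, groundKernel p r a 1 t|
      ≤ (1 + (1 / 2) ^ (-|a * (p - 1)|)) * 4 * δ ^ (p - r + 1) := by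
  obtain ⟨h0, h1⟩ := hδ
  have hb : 0 < 1 + δ := by linarith
  have hb1 : (1 + δ)⁻¹ < 1 := inv_lt_one_of_one_lt₀ (by linarith)
  have hlen : (1 + δ)⁻¹ - (1 - δ) = δ ^ 2 / (1 + δ) := by field_simp; ring
  have hlen0 : 0 ≤ (1 + δ)⁻¹ - (1 - δ) := by rw [hlen]; positivity
  have hlen1 : (1 + δ)⁻¹ - (1 - δ) ≤ δ ^ 2 := by
    rw [hlen]; exact div_le_self (sq_nonneg δ) (by linarith)
  have hK : 0 ≤ (1 + (1 / 2 : ℝ) ^ (-|a * (p - 1)|)) * (4 * (δ ^ (p - r + 1) / δ ^ 2)) := by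
    positivity
  have hbound : ∀ t ∈ Set.Ico (1 - δ) (1 + δ)⁻¹, ‖groundKernel p r a 1 t‖
      ≤ (1 + (1 / 2) ^ (-|a * (p - 1)|)) * (4 * (δ ^ (p - r + 1) / δ ^ 2)) := by
    intro t ht
    have ht2 : 1 / 2 ≤ t := by linarith [ht.1]
    have ht' : t ∈ Set.Ioo (0 : ℝ) 1 := ⟨by linarith, ht.2.trans hb1⟩
    have h2 : 0 < 1 - t := sub_pos.2 ht'.2
    have h3 : δ / 2 ≤ 1 - t := by
      have h4 : δ / 2 ≤ 1 - (1 + δ)⁻¹ := by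
        have : 1 - (1 + δ)⁻¹ = δ / (1 + δ) := by field_simp; ring
        rw [this]
        gcongr
        linarith
      linarith [ht.2]
    rw [norm_eq_abs, abs_groundKernel_one ha0 ht']
    refine (abs_rpow_sub_one_rpow_div_le ha (by linarith) ht').trans ?_
    gcongr
    · calc t ^ (a * (p - 1)) ≤ t ^ (-|a * (p - 1)|) :=
            rpow_le_rpow_of_exponent_ge ht'.1 ht'.2.le (neg_abs_le _)
        _ ≤ (1 / 2) ^ (-|a * (p - 1)|) :=
            rpow_le_rpow_of_nonpos (by norm_num) ht2 (neg_nonpos.2 (abs_nonneg _))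
    · have e : p - 1 - r = (p - r + 1) - (2 : ℕ) := by push_cast; ring
      rw [e, rpow_sub h2, rpow_natCast]
      calc (1 - t) ^ (p - r + 1) / (1 - t) ^ 2
          ≤ δ ^ (p - r + 1) / (δ / 2) ^ 2 := by
            gcongr
            · linarith
            · linarith [ht.1]
        _ = 4 * (δ ^ (p - r + 1) / δ ^ 2) := by field_simp; norm_num
  have := norm_setIntegral_le_of_norm_le_const (μ := volume) (by simp) hbound
  rw [norm_eq_abs, volume_real_Ico_of_le (by linarith)] at this
  refine this.trans ((mul_le_mul_of_nonneg_left hlen1 hK).trans_eq ?_)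
  field_simp

lemma tendsto_setIntegral_Ioo_left {f : ℝ → ℝ} (hf : IntegrableOn f (Set.Ioo 0 1))
    {l : Filter ℝ} {b : ℝ → ℝ} (hb : ∀ᶠ δ in l, b δ ∈ Set.Ioo 0 1) (hl : Tendsto b l (nhds 1)) :
    Tendsto (fun δ => ∫ t in Set.Ioo 0 (b δ), f t) l (nhds (∫ t in Set.Ioo 0 1, f t)) := by
  have hf' : IntegrableOn f (Set.Icc 0 1) := by rwa [integrableOn_Icc_iff_integrableOn_Ioo]
  have h := (intervalIntegral.continuousOn_primitive hf') 1 (Set.right_mem_Icc.2 zero_le_one)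
  simp only [ContinuousWithinAt, integral_Ioc_eq_integral_Ioo] at h
  exact h.comp (tendsto_nhdsWithin_iff.2 ⟨hl, hb.mono fun _ h => Set.Ioo_subset_Icc_self h⟩)

lemma tendsto_setIntegral_groundKernel_one {p r a : ℝ} (hp : 1 ≤ p) (ha : |a| ≤ 1) (ha0 : a ≠ 0)
    (hap : -1 < a * (p - 1)) (hap' : -1 < a * p) (hpr : -1 < p - r) (hr : a * p = r - 2) :
    Tendsto (fun δ => ∫ t in {t : ℝ | 0 < t ∧ δ < |t - 1|}, groundKernel p r a 1 t)
      (nhdsWithin 0 (Set.Ioi 0))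
      (nhds (-∫ t in Set.Ioo (0 : ℝ) 1, |t ^ a - 1| ^ p / |t - 1| ^ r)) := by
  have hid : Tendsto (fun δ : ℝ => δ) (nhdsWithin 0 (Set.Ioi 0)) (nhds 0) :=
    tendsto_id.mono_left nhdsWithin_le_nhds
  have hev : ∀ᶠ δ : ℝ in nhdsWithin 0 (Set.Ioi 0), δ ∈ Set.Ioo (0 : ℝ) (1 / 2) :=
    Ioo_mem_nhdsGT (by norm_num)
  have hinv : Tendsto (fun δ : ℝ => (1 + δ)⁻¹) (nhdsWithin 0 (Set.Ioi 0)) (nhds 1) := by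
    simpa using (hid.const_add 1).inv₀ (by norm_num)
  have hmain := tendsto_setIntegral_Ioo_left
    (integrableOn_abs_rpow_sub_one_rpow_div ha (by linarith) hap' hpr)
    (hev.mono fun δ hδ => ⟨inv_pos.2 (by linarith [hδ.1]),
      inv_lt_one_of_one_lt₀ (by linarith [hδ.1])⟩) hinv
  have hpow : Tendsto (fun δ : ℝ => (1 + (1 / 2 : ℝ) ^ (-|a * (p - 1)|)) * 4 * δ ^ (p - r + 1))
      (nhdsWithin 0 (Set.Ioi 0)) (nhds 0) := by
    have h := hid.rpow_const (p := p - r + 1) (Or.inr (by linarith))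
    rw [zero_rpow (by linarith)] at h
    simpa using h.const_mul ((1 + (1 / 2 : ℝ) ^ (-|a * (p - 1)|)) * 4)
  have herr : Tendsto (fun δ : ℝ => ∫ t in Set.Ico (1 - δ) (1 + δ)⁻¹, groundKernel p r a 1 t)
      (nhdsWithin 0 (Set.Ioi 0)) (nhds 0) :=
    squeeze_zero_norm' (hev.mono fun δ hδ =>
      abs_setIntegral_groundKernel_one_le hp ha ha0 hpr hδ) hpow
  have hlim := (hmain.add herr).neg
  rw [add_zero] at hlim
  refine hlim.congr' (hev.mono fun δ hδ => ?_)
  exact (setIntegral_groundKernel_one hp ha ha0 hap hap' hpr hr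
    ⟨hδ.1, hδ.2.trans (by norm_num)⟩).symm

open scoped Pointwise in
lemma setIntegral_groundKernel {p r a x ε : ℝ} (hx : 0 < x) :
    ∫ y in {y : ℝ | 0 < y ∧ ε < |y - x|}, groundKernel p r a x y
      = x ^ (a * (p - 1) - (r - 1))
        * ∫ t in {t : ℝ | 0 < t ∧ ε / x < |t - 1|}, groundKernel p r a 1 t := by
  have hset : {y : ℝ | 0 < y ∧ ε < |y - x|} = x • {t : ℝ | 0 < t ∧ ε / x < |t - 1|} := by
    ext y
    have e : x⁻¹ * y - 1 = x⁻¹ * (y - x) := by field_simp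
    rw [Set.mem_smul_set_iff_inv_smul_mem₀ hx.ne']
    simp only [Set.mem_ofPred_eq, smul_eq_mul]
    rw [e, abs_mul, abs_of_pos (inv_pos.2 hx), div_eq_inv_mul, mul_lt_mul_iff_right₀ (inv_pos.2 hx),
      mul_pos_iff_of_pos_left (inv_pos.2 hx)]
  have hmeas : MeasurableSet {t : ℝ | 0 < t ∧ ε / x < |t - 1|} :=
    (measurableSet_lt measurable_const measurable_id).inter
      (measurableSet_lt (g := fun t : ℝ => |t - 1|) measurable_const (by fun_prop))
  have h := Measure.setIntegral_comp_smul_of_pos volume (groundKernel p r a x)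
    {t : ℝ | 0 < t ∧ ε / x < |t - 1|} hx
  simp only [← hset, Module.finrank_self, pow_one, smul_eq_mul] at h
  rw [setIntegral_congr_fun (f := fun t => groundKernel p r a x (x * t)) hmeas
    (fun t ht => groundKernel_mul_left hx ht.1), integral_const_mul] at h
  rw [show a * (p - 1) - (r - 1) = a * (p - 1) - r + 1 by ring, rpow_add hx, rpow_one,
    mul_right_comm, h]
  field_simp

theorem ground_state_one_dim_limit
    (p s α xd : ℝ) (hp : 1 ≤ p) (hs : s ∈ Set.Ioo (0 : ℝ) 1) (hps : p * s ≠ 1)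
    (hα : α = (p * s - 1) / p) (hx : 0 < xd) :
    IntegrableOn (fun t : ℝ => |t ^ α - 1| ^ p / |t - 1| ^ (p * s + 1)) (Set.Ioo 0 1)
    ∧ (0 < ∫ t in Set.Ioo (0 : ℝ) 1, |t ^ α - 1| ^ p / |t - 1| ^ (p * s + 1))
    ∧ Tendsto
        (fun ε : ℝ => ∫ yd in {y : ℝ | 0 < y ∧ ε < |y - xd|},
          (yd ^ α - xd ^ α) * |yd ^ α - xd ^ α| ^ (p - 2) / |yd - xd| ^ (p * s + 1))
        (nhdsWithin 0 (Set.Ioi 0))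
        (nhds (-(xd ^ (α * (p - 1) - p * s)
          * ∫ t in Set.Ioo (0 : ℝ) 1, |t ^ α - 1| ^ p / |t - 1| ^ (p * s + 1)))) := by
  obtain ⟨hs0, hs1⟩ := hs
  have hp0 : 0 < p := by linarith
  have hps0 : 0 < p * s := mul_pos hp0 hs0
  have hpsp : p * s < p := by nlinarith
  have hαp : α * p = p * s - 1 := by rw [hα]; field_simp
  have hα0 : α ≠ 0 := by
    rw [hα]; exact div_ne_zero (sub_ne_zero.2 hps) hp0.ne'
  have hα1 : α < 1 := by nlinarith
  have hα2 : -1 < α := by nlinarith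
  have hαabs : |α| ≤ 1 := abs_le.2 ⟨hα2.le, hα1.le⟩
  have hint : IntegrableOn (fun t : ℝ => |t ^ α - 1| ^ p / |t - 1| ^ (p * s + 1)) (Set.Ioo 0 1) :=
    integrableOn_abs_rpow_sub_one_rpow_div hαabs hp0.le (by linarith) (by linarith)
  have hap : -1 < α * (p - 1) := by
    rw [mul_sub, hαp]
    nlinarith
  refine ⟨hint, ?_, ?_⟩
  · rw [← integral_Ioc_eq_integral_Ioo, ← intervalIntegral.integral_of_le zero_le_one]
    refine intervalIntegral.intervalIntegral_pos_of_pos_on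
      ((intervalIntegrable_iff_integrableOn_Ioo_of_le zero_le_one).2 hint) (fun t ht => ?_)
      zero_lt_one
    have h1 : 0 < |t ^ α - 1| := abs_pos.2 (sub_ne_zero.2 (rpow_ne_one_of_mem_Ioo hα0 ht))
    have h2 : 0 < |t - 1| := abs_pos.2 (sub_ne_zero.2 ht.2.ne)
    positivity
  · have hscale : Tendsto (fun ε : ℝ => ε / xd) (nhdsWithin 0 (Set.Ioi 0))
        (nhdsWithin 0 (Set.Ioi 0)) := by
      refine tendsto_nhdsWithin_iff.2 ⟨?_, ?_⟩
      · simpa using (tendsto_id.mono_left nhdsWithin_le_nhds :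
          Tendsto (fun ε : ℝ => ε) (nhdsWithin 0 (Set.Ioi 0)) (nhds 0)).div_const xd
      · filter_upwards [self_mem_nhdsWithin] with ε hε
        exact div_pos hε hx
    have h := ((tendsto_setIntegral_groundKernel_one (r := p * s + 1) hp hαabs hα0 hap
      (by linarith) (by linarith) (by linarith)).comp hscale).const_mul
      (xd ^ (α * (p - 1) - p * s))
    rw [mul_neg] at h
    refine h.congr fun ε => ?_
    have hk := setIntegral_groundKernel (p := p) (r := p * s + 1) (a := α) (ε := ε) hx
    rw [add_sub_cancel_right] at hk
    exact hk.symm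
end

section
/- Let d ≥ 1, p ∈ [1,∞), s ∈ (0,1) with ps ≠ 1. There exists κ(p,d,s) > 0 such that for every scalar function u ∈ C¹_c(ℝ^d_+): ∫_{ℝ^d_+} |u(x)|^p / x_d^{ps} dx ≤ κ(p,d,s) ∫_{ℝ^d_+}∫_{ℝ^d_+} |u(y) - u(x)|^p |y₁ - x₁|^p / (|y-x|^{d+ps} |y-x|^p) dy dx. -/
open MeasureTheory Real

namespace WeightedHardy

variable {d : ℕ}

/-- The open half space of points with positive `j`-th coordinate. -/
def halfSpace (j : Fin d) : Set (EuclideanSpace ℝ (Fin d)) := {x | 0 < x j}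

/-- The integrand of the weighted fractional seminorm. -/
noncomputable def seminormKernel (p s : ℝ) (i : Fin d) (u : EuclideanSpace ℝ (Fin d) → ℝ)
    (x y : EuclideanSpace ℝ (Fin d)) : ℝ :=
  |u y - u x| ^ p * |y i - x i| ^ p / ‖y - x‖ ^ ((d : ℝ) + p * s + p)

lemma mem_halfSpace {j : Fin d} {x : EuclideanSpace ℝ (Fin d)} : x ∈ halfSpace j ↔ 0 < x j :=
  Iff.rfl

lemma measurableSet_halfSpace (j : Fin d) : MeasurableSet (halfSpace j) :=
  measurableSet_lt measurable_const (by fun_prop)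

lemma seminormKernel_nonneg (p s : ℝ) (i : Fin d) (u : EuclideanSpace ℝ (Fin d) → ℝ)
    (x y : EuclideanSpace ℝ (Fin d)) : 0 ≤ seminormKernel p s i u x y := by
  unfold seminormKernel; positivity

lemma measurable_seminormKernel (p s : ℝ) (i : Fin d) {u : EuclideanSpace ℝ (Fin d) → ℝ}
    (hu : Measurable u) :
    Measurable fun q : EuclideanSpace ℝ (Fin d) × EuclideanSpace ℝ (Fin d) =>
      seminormKernel p s i u q.1 q.2 := by
  unfold seminormKernel
  fun_prop

lemma lintegral_comp_add_coord_smul (j : Fin d) {z : EuclideanSpace ℝ (Fin d)}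
    (hz : 0 < 1 + z j) {f : EuclideanSpace ℝ (Fin d) → ENNReal} (hf : Measurable f) :
    ∫⁻ x, f (x + x j • z) = ENNReal.ofReal (1 + z j)⁻¹ * ∫⁻ x, f x := by
  have hdet : LinearMap.det (LinearMap.transvection
      (EuclideanSpace.proj j : EuclideanSpace ℝ (Fin d) →L[ℝ] ℝ).toLinearMap z) = 1 + z j := by
    rw [LinearMap.transvection.det]; rfl
  have hmap := Measure.map_linearMap_addHaar_eq_smul_addHaar
    (volume : Measure (EuclideanSpace ℝ (Fin d))) (hdet ▸ hz.ne')
  rw [hdet, abs_of_pos (inv_pos.2 hz)] at hmap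
  rw [← smul_eq_mul, ← lintegral_smul_measure, ← hmap, lintegral_map hf]
  · rfl
  · exact (LinearMap.continuous_of_finiteDimensional _).measurable

lemma lintegral_eq_lintegral_comp_add_smul (x : EuclideanSpace ℝ (Fin d)) {t : ℝ} (ht : 0 < t)
    {f : EuclideanSpace ℝ (Fin d) → ENNReal} (hf : Measurable f) :
    ∫⁻ y, f y = ENNReal.ofReal (t ^ d) * ∫⁻ z, f (x + t • z) := by
  have hmap := Measure.map_addHaar_smul (volume : Measure (EuclideanSpace ℝ (Fin d))) ht.ne'
  have h : ∫⁻ z, f (x + t • z) = ENNReal.ofReal (t ^ d)⁻¹ * ∫⁻ y, f y := by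
    have := lintegral_map (μ := (volume : Measure (EuclideanSpace ℝ (Fin d))))
      (f := fun y => f (x + y)) (g := fun z => t • z) (by fun_prop) (by fun_prop)
    rw [← this, hmap, lintegral_smul_measure, lintegral_add_left_eq_self, finrank_euclideanSpace_fin,
      abs_of_pos (by positivity), smul_eq_mul]
  rw [h, ← mul_assoc, ← ENNReal.ofReal_mul (by positivity), mul_inv_cancel₀ (by positivity),
    ENNReal.ofReal_one, one_mul]

lemma abs_sub_one_mul_le {a n b : ℝ} (h₁ : a * n ≤ n + b) (h₂ : n ≤ a * n + b) (hn : 0 ≤ n) :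
    |a - 1| * n ≤ b := by
  calc |a - 1| * n = |(a - 1) * n| := by rw [abs_mul, abs_of_nonneg hn]
    _ ≤ b := abs_le.2 ⟨by linarith, by linarith⟩

/-- Reverse triangle inequality for the `L^p` seminorms of `g`, `h` and a multiple of `g`. -/
lemma ofReal_abs_sub_one_rpow_mul_lintegral_le {α : Type*} [MeasurableSpace α] {μ : Measure α}
    {p a : ℝ} (hp : 1 ≤ p) (ha : 0 ≤ a) {g g' h : α → ENNReal} (hg : Measurable g)
    (hg' : Measurable g') (hh : Measurable h) (hfin : ∫⁻ x, g x ^ p ∂μ ≠ ⊤)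
    (heq : ∫⁻ x, g' x ^ p ∂μ = ENNReal.ofReal (a ^ p) * ∫⁻ x, g x ^ p ∂μ)
    (h₁ : ∀ x, g' x ≤ g x + h x) (h₂ : ∀ x, g x ≤ g' x + h x) :
    ENNReal.ofReal (|a - 1| ^ p) * ∫⁻ x, g x ^ p ∂μ ≤ ∫⁻ x, h x ^ p ∂μ := by
  have hp0 : 0 < p := by linarith
  by_cases hD : ∫⁻ x, h x ^ p ∂μ = ⊤
  · simp [hD]
  have key : ∀ {f₁ f₂ : α → ENNReal}, Measurable f₂ →
      (∀ x, f₁ x ≤ f₂ x + h x) → (∫⁻ x, f₁ x ^ p ∂μ) ^ (1 / p) ≤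
        (∫⁻ x, f₂ x ^ p ∂μ) ^ (1 / p) + (∫⁻ x, h x ^ p ∂μ) ^ (1 / p) := by
    intro f₁ f₂ hf₂ hle
    refine le_trans ?_ (ENNReal.lintegral_Lp_add_le hf₂.aemeasurable hh.aemeasurable hp)
    gcongr with x
    exact hle x
  have k₁ := key hg h₁
  have k₂ := key hg' h₂
  set K := ∫⁻ x, g x ^ p ∂μ
  set D := ∫⁻ x, h x ^ p ∂μ
  have hroot : (∫⁻ x, g' x ^ p ∂μ) ^ (1 / p) = ENNReal.ofReal a * K ^ (1 / p) := by
    rw [heq, ENNReal.mul_rpow_of_nonneg _ _ (by positivity),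
      ENNReal.ofReal_rpow_of_nonneg (by positivity) (by positivity), ← Real.rpow_mul ha,
      mul_one_div_cancel hp0.ne', Real.rpow_one]
  rw [hroot] at k₁ k₂
  have hKr : K ^ (1 / p) ≠ ⊤ := ENNReal.rpow_ne_top_of_nonneg (by positivity) hfin
  have hDr : D ^ (1 / p) ≠ ⊤ := ENNReal.rpow_ne_top_of_nonneg (by positivity) hD
  obtain ⟨n, hn0, hn⟩ : ∃ n : ℝ, 0 ≤ n ∧ K ^ (1 / p) = ENNReal.ofReal n :=
    ⟨_, ENNReal.toReal_nonneg, (ENNReal.ofReal_toReal hKr).symm⟩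
  obtain ⟨b, hb0, hb⟩ : ∃ b : ℝ, 0 ≤ b ∧ D ^ (1 / p) = ENNReal.ofReal b :=
    ⟨_, ENNReal.toReal_nonneg, (ENNReal.ofReal_toReal hDr).symm⟩
  rw [hn, hb, ← ENNReal.ofReal_mul ha, ← ENNReal.ofReal_add (by positivity) (by positivity),
    ENNReal.ofReal_le_ofReal_iff (by positivity)] at k₁ k₂
  have hpow : ∀ {x : ENNReal} {r : ℝ}, 0 ≤ r → x ^ (1 / p) = ENNReal.ofReal r →
      x = ENNReal.ofReal (r ^ p) := by
    intro x r hr hx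
    rw [← ENNReal.ofReal_rpow_of_nonneg hr hp0.le, ← hx, ← ENNReal.rpow_mul,
      one_div_mul_cancel hp0.ne', ENNReal.rpow_one]
  rw [hpow hn0 hn, hpow hb0 hb, ← ENNReal.ofReal_mul (by positivity),
    ← Real.mul_rpow (abs_nonneg _) hn0]
  exact ENNReal.ofReal_le_ofReal (Real.rpow_le_rpow (by positivity)
    (abs_sub_one_mul_le k₁ k₂ hn0) hp0.le)

lemma add_coord_smul_apply (j : Fin d) (x z : EuclideanSpace ℝ (Fin d)) :
    (x + x j • z) j = (1 + z j) * x j := by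
  simp; ring

lemma add_coord_smul_mem_halfSpace_iff {j : Fin d} {x z : EuclideanSpace ℝ (Fin d)}
    (hz : 0 < 1 + z j) : x + x j • z ∈ halfSpace j ↔ x ∈ halfSpace j := by
  rw [mem_halfSpace, mem_halfSpace, add_coord_smul_apply, mul_pos_iff_of_pos_left hz]

lemma lintegral_indicator_div_rpow {p : ℝ} (hp : 1 ≤ p) (s : ℝ) (j : Fin d)
    (v : EuclideanSpace ℝ (Fin d) → ℝ) :
    ∫⁻ x, (halfSpace j).indicator (fun x => ENNReal.ofReal (|v x| / x j ^ s)) x ^ p =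
      ∫⁻ x in halfSpace j, ENNReal.ofReal (|v x| ^ p / x j ^ (p * s)) := by
  rw [← lintegral_indicator (measurableSet_halfSpace j)]
  congr 1 with x
  by_cases hx : x ∈ halfSpace j
  · have hx' : 0 < x j := hx
    rw [Set.indicator_of_mem hx, Set.indicator_of_mem hx,
      ENNReal.ofReal_rpow_of_nonneg (by positivity) (by linarith),
      Real.div_rpow (by positivity) (by positivity), ← Real.rpow_mul hx'.le, mul_comm s]
  · rw [Set.indicator_of_notMem hx, Set.indicator_of_notMem hx, ENNReal.zero_rpow_of_pos (by linarith)]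

lemma ofReal_abs_rpow_sub_one_mul_lintegral_le {p : ℝ} (hp : 1 ≤ p) (s : ℝ) (j : Fin d)
    {u : EuclideanSpace ℝ (Fin d) → ℝ} (hu : Measurable u)
    (hfin : ∫⁻ x in halfSpace j, ENNReal.ofReal (|u x| ^ p / x j ^ (p * s)) ≠ ⊤)
    {z : EuclideanSpace ℝ (Fin d)} (hz : 0 < 1 + z j) :
    ENNReal.ofReal (|(1 + z j) ^ (s - 1 / p) - 1| ^ p) *
        ∫⁻ x in halfSpace j, ENNReal.ofReal (|u x| ^ p / x j ^ (p * s)) ≤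
      ∫⁻ x in halfSpace j, ENNReal.ofReal (|u (x + x j • z) - u x| ^ p / x j ^ (p * s)) := by
  have hp0 : 0 < p := by linarith
  have hmeas : ∀ {v : EuclideanSpace ℝ (Fin d) → ℝ}, Measurable v → Measurable
      ((halfSpace j).indicator fun x => ENNReal.ofReal (|v x| / x j ^ s)) := fun hv =>
    Measurable.indicator (by fun_prop) (measurableSet_halfSpace j)
  set g := (halfSpace j).indicator fun x => ENNReal.ofReal (|u x| / x j ^ s) with hg
  have hgT : ∀ {x}, x ∈ halfSpace j → ENNReal.ofReal ((1 + z j) ^ s) * g (x + x j • z) =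
      ENNReal.ofReal (|u (x + x j • z)| / x j ^ s) := by
    intro x hx
    have hx' : 0 < x j := hx
    rw [hg, Set.indicator_of_mem ((add_coord_smul_mem_halfSpace_iff hz).2 hx),
      ← ENNReal.ofReal_mul (by positivity), add_coord_smul_apply, Real.mul_rpow hz.le hx'.le]
    congr 1
    have := Real.rpow_pos_of_pos hz s
    field_simp
  have hgT0 : ∀ {x}, x ∉ halfSpace j → g (x + x j • z) = 0 := fun hx =>
    Set.indicator_of_notMem (fun h => hx ((add_coord_smul_mem_halfSpace_iff hz).1 h)) _
  have htri : ∀ (a b : ℝ) {c : ℝ}, 0 ≤ c → ENNReal.ofReal (|a| / c) ≤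
      ENNReal.ofReal (|b| / c) + ENNReal.ofReal (|a - b| / c) := by
    intro a b c hc
    rw [← ENNReal.ofReal_add (by positivity) (by positivity), ← add_div]
    refine ENNReal.ofReal_le_ofReal (div_le_div_of_nonneg_right ?_ hc)
    calc |a| = |b + (a - b)| := by ring_nf
      _ ≤ _ := abs_add_le _ _
  have hdiff : Measurable fun x : EuclideanSpace ℝ (Fin d) => u (x + x j • z) - u x := by
    have : Measurable fun x : EuclideanSpace ℝ (Fin d) => x + x j • z := by fun_prop
    exact (hu.comp this).sub hu
  rw [← lintegral_indicator_div_rpow hp] at hfin ⊢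
  rw [← lintegral_indicator_div_rpow hp s j (fun x => u (x + x j • z) - u x)]
  refine ofReal_abs_sub_one_rpow_mul_lintegral_le
    (g' := fun x => ENNReal.ofReal ((1 + z j) ^ s) * g (x + x j • z))
    hp (by positivity) (hmeas hu) ?_ (hmeas hdiff) hfin ?_ ?_ ?_
  · exact ((hmeas hu).comp (by fun_prop)).const_mul _
  · simp_rw [ENNReal.mul_rpow_of_nonneg _ _ hp0.le]
    rw [lintegral_const_mul' _ _ (by finiteness),
      lintegral_comp_add_coord_smul j hz ((hmeas hu).pow_const p), ← mul_assoc,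
      ENNReal.ofReal_rpow_of_nonneg (by positivity) hp0.le, ← ENNReal.ofReal_mul (by positivity),
      ← Real.rpow_neg_one, ← Real.rpow_mul hz.le, ← Real.rpow_mul hz.le, ← Real.rpow_add hz]
    congr 4
    field_simp
    ring
  · intro x
    by_cases hx : x ∈ halfSpace j
    · have hx' : 0 < x j := hx
      simp only [hgT hx]
      rw [Set.indicator_of_mem hx, Set.indicator_of_mem hx]
      exact htri _ _ (by positivity)
    · simp [hgT0 hx]
  · intro x
    by_cases hx : x ∈ halfSpace j
    · have hx' : 0 < x j := hx
      simp only [hgT hx]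
      rw [Set.indicator_of_mem hx, Set.indicator_of_mem hx, abs_sub_comm]
      exact htri _ _ (by positivity)
    · simp [hg, hx]

lemma abs_two_rpow_sub_one_le {l : ℝ} (hl : 2 ≤ l) (e : ℝ) :
    |(2 : ℝ) ^ e - 1| ≤ |l ^ e - 1| := by
  rcases le_total 0 e with he | he
  · have h₁ := Real.one_le_rpow one_le_two he
    have h₂ := Real.rpow_le_rpow zero_le_two hl he
    rw [abs_of_nonneg (by linarith), abs_of_nonneg (by linarith)]
    linarith
  · have h₁ := Real.rpow_le_one_of_one_le_of_nonpos one_le_two he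
    have h₂ := Real.rpow_le_rpow_of_nonpos zero_lt_two hl he
    rw [abs_of_nonpos (by linarith), abs_of_nonpos (by linarith)]
    linarith

lemma div_le_mul_seminormKernel {p s : ℝ} (hp : 1 ≤ p) (hs : 0 < s) (i j : Fin d)
    (u : EuclideanSpace ℝ (Fin d) → ℝ) {R : ℝ} {x z : EuclideanSpace ℝ (Fin d)}
    (hx : x ∈ halfSpace j) (hzi : 1 ≤ z i) (hR : ‖z‖ ≤ R) :
    |u (x + x j • z) - u x| ^ p / x j ^ (p * s) ≤
      R ^ ((d : ℝ) + p * s + p) * (x j ^ d * seminormKernel p s i u x (x + x j • z)) := by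
  have hx' : 0 < x j := hx
  have hz : 0 < ‖z‖ := norm_pos_iff.2 (by rintro rfl; norm_num at hzi)
  have hq : 0 ≤ (d : ℝ) + p * s + p := by positivity
  have hRq : ‖z‖ ^ ((d : ℝ) + p * s + p) ≤ R ^ ((d : ℝ) + p * s + p) :=
    Real.rpow_le_rpow hz.le hR hq
  have hzp : 1 ≤ z i ^ p := Real.one_le_rpow hzi (by linarith)
  have hcoord : (x + x j • z) i - x i = x j * z i := by simp
  have hexp : x j ^ ((d : ℝ) + p * s + p) = x j ^ d * x j ^ (p * s) * x j ^ p := by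
    rw [Real.rpow_add hx', Real.rpow_add hx', Real.rpow_natCast]
  unfold seminormKernel
  rw [hcoord, add_sub_cancel_left, norm_smul, Real.norm_of_nonneg hx'.le,
    Real.mul_rpow hx'.le hz.le, abs_of_nonneg (mul_nonneg hx'.le (by linarith)),
    Real.mul_rpow hx'.le (by linarith), hexp]
  have h1 : 1 ≤ R ^ ((d : ℝ) + p * s + p) / ‖z‖ ^ ((d : ℝ) + p * s + p) * z i ^ p :=
    one_le_mul_of_one_le_of_one_le ((one_le_div (by positivity)).2 hRq) hzp
  calc _ ≤ |u (x + x j • z) - u x| ^ p / x j ^ (p * s) *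
        (R ^ ((d : ℝ) + p * s + p) / ‖z‖ ^ ((d : ℝ) + p * s + p) * z i ^ p) :=
      le_mul_of_one_le_right (by positivity) h1
    _ = _ := by field_simp

lemma setLIntegral_le_mul_setLIntegral_seminormKernel {p s : ℝ} (hp : 1 ≤ p) (hs : 0 < s)
    (i j : Fin d) {u : EuclideanSpace ℝ (Fin d) → ℝ} (hu : Measurable u) {R : ℝ}
    {x : EuclideanSpace ℝ (Fin d)} (hx : x ∈ halfSpace j) {Z : Set (EuclideanSpace ℝ (Fin d))}
    (hZm : MeasurableSet Z) (hZ : ∀ z ∈ Z, (∀ k, 1 ≤ z k) ∧ ‖z‖ ≤ R) (hR : 0 ≤ R) :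
    ∫⁻ z in Z, ENNReal.ofReal (|u (x + x j • z) - u x| ^ p / x j ^ (p * s)) ≤
      ENNReal.ofReal (R ^ ((d : ℝ) + p * s + p)) *
        ∫⁻ y in halfSpace j, ENNReal.ofReal (seminormKernel p s i u x y) := by
  have hx' : 0 < x j := hx
  have hk : Measurable fun y => ENNReal.ofReal (seminormKernel p s i u x y) :=
    ((measurable_seminormKernel p s i hu).comp measurable_prodMk_left).ennreal_ofReal
  rw [← lintegral_indicator (measurableSet_halfSpace j),
    lintegral_eq_lintegral_comp_add_smul x hx' (hk.indicator (measurableSet_halfSpace j)),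
    ← lintegral_const_mul' _ _ ENNReal.ofReal_ne_top,
    ← lintegral_const_mul' _ _ ENNReal.ofReal_ne_top]
  refine le_trans (setLIntegral_mono' hZm fun z hz => ?_) (setLIntegral_le_lintegral Z _)
  have hmem : x + x j • z ∈ halfSpace j :=
    (add_coord_smul_mem_halfSpace_iff (by linarith [(hZ z hz).1 j])).2 hx
  rw [Set.indicator_of_mem hmem, ← ENNReal.ofReal_mul (by positivity),
    ← ENNReal.ofReal_mul (by positivity)]
  exact ENNReal.ofReal_le_ofReal
    (div_le_mul_seminormKernel hp hs i j u hx ((hZ z hz).1 i) (hZ z hz).2)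

/-- The weighted Hardy inequality for lower Lebesgue integrals. -/
lemma exists_lintegral_le_mul_lintegral_seminormKernel {p s : ℝ} (hp : 1 ≤ p) (hs : 0 < s)
    (hps : p * s ≠ 1) (i j : Fin d) :
    ∃ κ : ℝ, 0 < κ ∧ ∀ u : EuclideanSpace ℝ (Fin d) → ℝ, Measurable u →
      ∫⁻ x in halfSpace j, ENNReal.ofReal (|u x| ^ p / x j ^ (p * s)) ≠ ⊤ →
      ∫⁻ x in halfSpace j, ENNReal.ofReal (|u x| ^ p / x j ^ (p * s)) ≤
        ENNReal.ofReal κ * ∫⁻ x in halfSpace j, ∫⁻ y in halfSpace j,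
          ENNReal.ofReal (seminormKernel p s i u x y) := by
  have hp0 : 0 < p := by linarith
  set c : EuclideanSpace ℝ (Fin d) := WithLp.toLp 2 fun _ => 2 with hc
  set Z := Metric.ball c 1
  have hZ : ∀ z ∈ Z, (∀ k, 1 ≤ z k) ∧ ‖z‖ ≤ ‖c‖ + 1 := by
    intro z hz
    have hz' : ‖z - c‖ < 1 := mem_ball_iff_norm.1 hz
    refine ⟨fun k => ?_, by linarith [norm_sub_norm_le z c]⟩
    have h := (PiLp.norm_apply_le (z - c) k).trans hz'.le
    have h2 : (z - c) k = z k - 2 := by simp [hc]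
    rw [h2, Real.norm_eq_abs, abs_le] at h
    linarith [h.1]
  have hZ0 : 0 < (volume Z).toReal :=
    ENNReal.toReal_pos (Metric.measure_ball_pos volume c one_pos).ne' measure_ball_lt_top.ne
  have hm : 0 < |(2 : ℝ) ^ (s - 1 / p) - 1| ^ p := by
    refine Real.rpow_pos_of_pos (abs_pos.2 (sub_ne_zero.2 fun h => ?_)) p
    have he : s - 1 / p ≠ 0 := fun h0 => hps (by field_simp at h0; linarith)
    rcases he.lt_or_gt with he | he
    · exact (Real.rpow_lt_one_of_one_lt_of_neg one_lt_two he).ne h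
    · exact (Real.one_lt_rpow one_lt_two he).ne' h
  set m := |(2 : ℝ) ^ (s - 1 / p) - 1| ^ p
  set Q := (‖c‖ + 1) ^ ((d : ℝ) + p * s + p)
  have hQ : 0 < Q := by positivity
  refine ⟨Q / (m * (volume Z).toReal), by positivity, fun u hu hfin => ?_⟩
  set K := ∫⁻ x in halfSpace j, ENNReal.ofReal (|u x| ^ p / x j ^ (p * s))
  set I := ∫⁻ x in halfSpace j, ∫⁻ y in halfSpace j, ENNReal.ofReal (seminormKernel p s i u x y)
  have hmeas : Measurable (Function.uncurry fun z x : EuclideanSpace ℝ (Fin d) =>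
      ENNReal.ofReal (|u (x + x j • z) - u x| ^ p / x j ^ (p * s))) := by
    have : Measurable fun q : EuclideanSpace ℝ (Fin d) × EuclideanSpace ℝ (Fin d) =>
      u (q.2 + q.2 j • q.1) := hu.comp (by fun_prop)
    unfold Function.uncurry
    fun_prop
  have key : ENNReal.ofReal (m * (volume Z).toReal) * K ≤ ENNReal.ofReal Q * I := by
    calc ENNReal.ofReal (m * (volume Z).toReal) * K
        = ∫⁻ _ in Z, ENNReal.ofReal m * K := by
          rw [setLIntegral_const, ENNReal.ofReal_mul hm.le,
            ENNReal.ofReal_toReal measure_ball_lt_top.ne]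
          ring
      _ ≤ ∫⁻ z in Z, ∫⁻ x in halfSpace j,
            ENNReal.ofReal (|u (x + x j • z) - u x| ^ p / x j ^ (p * s)) := by
          refine setLIntegral_mono' measurableSet_ball fun z hz => ?_
          have hzj := (hZ z hz).1 j
          refine le_trans ?_
            (ofReal_abs_rpow_sub_one_mul_lintegral_le hp s j hu hfin (by linarith))
          gcongr
          exact Real.rpow_le_rpow (abs_nonneg _) (abs_two_rpow_sub_one_le (by linarith) _) hp0.le
      _ = ∫⁻ x in halfSpace j, ∫⁻ z in Z,
            ENNReal.ofReal (|u (x + x j • z) - u x| ^ p / x j ^ (p * s)) :=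
          lintegral_lintegral_swap hmeas.aemeasurable
      _ ≤ ∫⁻ x in halfSpace j, ENNReal.ofReal Q *
            ∫⁻ y in halfSpace j, ENNReal.ofReal (seminormKernel p s i u x y) :=
          setLIntegral_mono' (measurableSet_halfSpace j) fun x hx =>
            setLIntegral_le_mul_setLIntegral_seminormKernel hp hs i j hu hx measurableSet_ball hZ
              (by positivity)
      _ = ENNReal.ofReal Q * I := lintegral_const_mul' _ _ ENNReal.ofReal_ne_top
  rw [ENNReal.ofReal_div_of_pos (by positivity), ENNReal.mul_comm_div, ← mul_div_assoc,
    ENNReal.le_div_iff_mul_le (Or.inl (by simp; positivity)) (Or.inl ENNReal.ofReal_ne_top),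
    mul_comm K]
  exact key

lemma integrable_min_rpow_div_rpow (hd : 1 ≤ d) {p s : ℝ} (hp : 1 ≤ p) (hs : s ∈ Set.Ioo (0 : ℝ) 1)
    {L M : ℝ} (hL : 0 ≤ L) (hM : 0 ≤ M) :
    Integrable fun h : EuclideanSpace ℝ (Fin d) =>
      min (L * ‖h‖) M ^ p / ‖h‖ ^ ((d : ℝ) + p * s) := by
  have : Nonempty (Fin d) := ⟨⟨0, hd⟩⟩
  have hs0 := hs.1
  have hs1 := hs.2
  have hp0 : 0 < p := by linarith
  rw [integrable_fun_norm_addHaar volume (f := fun r => min (L * r) M ^ p / r ^ ((d : ℝ) + p * s)),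
    finrank_euclideanSpace_fin]
  have hmeas : Measurable fun r : ℝ =>
      r ^ (d - 1) • (min (L * r) M ^ p / r ^ ((d : ℝ) + p * s)) := by
    simp only [smul_eq_mul]; fun_prop
  have hpow : ∀ {r : ℝ}, 0 < r → r ^ (d - 1) / r ^ ((d : ℝ) + p * s) = r ^ (-1 - p * s) := by
    intro r hr
    rw [← Real.rpow_natCast, ← Real.rpow_sub hr, Nat.cast_sub hd]
    congr 1
    push_cast
    ring
  have hnorm : ∀ {r : ℝ}, 0 < r → ‖r ^ (d - 1) • (min (L * r) M ^ p / r ^ ((d : ℝ) + p * s))‖ =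
      min (L * r) M ^ p * r ^ (-1 - p * s) := by
    intro r hr
    have : 0 ≤ min (L * r) M := le_min (by positivity) hM
    rw [Real.norm_of_nonneg (by positivity), ← hpow hr, smul_eq_mul]
    ring
  have hunion : Set.Ioi (0 : ℝ) = Set.Ioo 0 2 ∪ Set.Ioi 1 := by
    rw [Set.Ioo_union_Ioi (by norm_num)]
    norm_num
  rw [hunion, integrableOn_union]
  constructor
  · have hexp : -1 < p - 1 - p * s := by nlinarith
    refine (((intervalIntegral.integrableOn_Ioo_rpow_iff two_pos).2 hexp).const_mul (L ^ p)).mono'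
      hmeas.aestronglyMeasurable ((ae_restrict_mem measurableSet_Ioo).mono fun r hr => ?_)
    have hr0 : 0 < r := hr.1
    rw [hnorm hr0, show p - 1 - p * s = p + (-1 - p * s) by ring, Real.rpow_add hr0, ← mul_assoc,
      ← Real.mul_rpow hL hr0.le]
    gcongr
    exact min_le_left _ _
  · have hexp : -1 - p * s < -1 := by nlinarith
    refine ((integrableOn_Ioi_rpow_of_lt hexp one_pos).const_mul (M ^ p)).mono'
      hmeas.aestronglyMeasurable ((ae_restrict_mem measurableSet_Ioi).mono fun r hr => ?_)
    have hr0 : 0 < r := one_pos.trans hr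
    rw [hnorm hr0]
    gcongr
    exact min_le_right _ _

lemma seminormKernel_le {p s : ℝ} (hp : 1 ≤ p) (i : Fin d) {u : EuclideanSpace ℝ (Fin d) → ℝ}
    {x y : EuclideanSpace ℝ (Fin d)} {L M : ℝ} (hL : |u y - u x| ≤ L * ‖y - x‖)
    (hM : |u y - u x| ≤ M) :
    seminormKernel p s i u x y ≤ min (L * ‖y - x‖) M ^ p / ‖y - x‖ ^ ((d : ℝ) + p * s) := by
  have hp0 : 0 < p := by linarith
  have hmin : 0 ≤ min (L * ‖y - x‖) M := (abs_nonneg _).trans (le_min hL hM)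
  rcases eq_or_ne y x with rfl | hne
  · simp only [seminormKernel, sub_self, abs_zero, Real.zero_rpow hp0.ne', zero_mul, zero_div]
    exact div_nonneg (Real.rpow_nonneg (by simpa using hmin) _) (by positivity)
  · have hr : 0 < ‖y - x‖ := norm_pos_iff.2 (sub_ne_zero.2 hne)
    have hcoord : |y i - x i| ≤ ‖y - x‖ := by simpa using PiLp.norm_apply_le (y - x) i
    unfold seminormKernel
    rw [Real.rpow_add hr, div_le_div_iff₀ (by positivity) (by positivity)]
    calc |u y - u x| ^ p * |y i - x i| ^ p * ‖y - x‖ ^ ((d : ℝ) + p * s)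
        ≤ min (L * ‖y - x‖) M ^ p * ‖y - x‖ ^ p * ‖y - x‖ ^ ((d : ℝ) + p * s) := by
          gcongr
          exact le_min hL hM
      _ = _ := by ring

lemma lintegral_lintegral_seminormKernel_lt_top (hd : 1 ≤ d) {p s : ℝ} (hp : 1 ≤ p)
    (hs : s ∈ Set.Ioo (0 : ℝ) 1) (i j : Fin d) {u : EuclideanSpace ℝ (Fin d) → ℝ}
    (hu : ContDiff ℝ 1 u) (hc : HasCompactSupport u) :
    ∫⁻ x in halfSpace j, ∫⁻ y in halfSpace j, ENNReal.ofReal (seminormKernel p s i u x y) < ⊤ := by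
  have hp0 : 0 < p := by linarith
  obtain ⟨L, hL⟩ := ContDiff.lipschitzWith_of_hasCompactSupport hc hu one_ne_zero
  obtain ⟨M, hM⟩ := hc.exists_bound_of_continuous hu.continuous
  have hM0 : 0 ≤ M := (norm_nonneg _).trans (hM 0)
  have hLip : ∀ x y, |u y - u x| ≤ L * ‖y - x‖ := fun x y => by
    simpa [Real.norm_eq_abs] using hL.norm_sub_le y x
  have hbd : ∀ x y, |u y - u x| ≤ 2 * M := fun x y => by
    have := (norm_sub_le (u y) (u x)).trans (add_le_add (hM y) (hM x))
    rw [Real.norm_eq_abs] at this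
    linarith
  set G : EuclideanSpace ℝ (Fin d) → ENNReal := fun h =>
    ENNReal.ofReal (min (L * ‖h‖) (2 * M) ^ p / ‖h‖ ^ ((d : ℝ) + p * s)) with hG
  have hGm : Measurable G := by fun_prop
  have hGfin : ∫⁻ h, G h < ⊤ :=
    (integrable_min_rpow_div_rpow hd hp hs L.2 (by positivity)).lintegral_lt_top
  set T : EuclideanSpace ℝ (Fin d) → ENNReal := (tsupport u).indicator 1 with hT
  have hSm : MeasurableSet (tsupport u) := (isClosed_tsupport u).measurableSet
  have hTm : Measurable T := measurable_one.indicator hSm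
  have hTfin : ∫⁻ x, T x < ⊤ := by
    rw [hT, lintegral_indicator_one hSm]
    exact hc.isCompact.measure_lt_top
  have hle : ∀ x y, ENNReal.ofReal (seminormKernel p s i u x y) ≤
      T x * G (y - x) + T y * G (y - x) := by
    intro x y
    have hk := ENNReal.ofReal_le_ofReal
      (seminormKernel_le (s := s) hp i (hLip x y) (hbd x y))
    by_cases hx : x ∈ tsupport u
    · simpa [hT, hx] using hk.trans le_self_add
    · by_cases hy : y ∈ tsupport u
      · simpa [hT, hx, hy] using hk
      · simp [seminormKernel, image_eq_zero_of_notMem_tsupport hx,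
          image_eq_zero_of_notMem_tsupport hy, Real.zero_rpow hp0.ne']
  have h₁ : ∫⁻ x, ∫⁻ y, T x * G (y - x) = (∫⁻ x, T x) * ∫⁻ h, G h := by
    rw [← lintegral_mul_const _ hTm]
    congr 1 with x
    rw [lintegral_const_mul _ (by fun_prop), lintegral_sub_right_eq_self]
  have h₂ : ∫⁻ x, ∫⁻ y, T y * G (y - x) = (∫⁻ x, T x) * ∫⁻ h, G h := by
    rw [lintegral_lintegral_swap (by unfold Function.uncurry; fun_prop),
      ← lintegral_mul_const _ hTm]
    congr 1 with y
    rw [lintegral_const_mul _ (by fun_prop), lintegral_sub_left_eq_self]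
  calc ∫⁻ x in halfSpace j, ∫⁻ y in halfSpace j, ENNReal.ofReal (seminormKernel p s i u x y)
      ≤ ∫⁻ x, ∫⁻ y, ENNReal.ofReal (seminormKernel p s i u x y) :=
        (setLIntegral_le_lintegral _ _).trans
          (lintegral_mono fun x => setLIntegral_le_lintegral _ _)
    _ ≤ ∫⁻ x, ∫⁻ y, (T x * G (y - x) + T y * G (y - x)) :=
        lintegral_mono fun x => lintegral_mono fun y => hle x y
    _ = (∫⁻ x, ∫⁻ y, T x * G (y - x)) + ∫⁻ x, ∫⁻ y, T y * G (y - x) := by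
        rw [← lintegral_add_left]
        · congr 1 with x
          exact lintegral_add_left (by fun_prop) _
        · exact Measurable.lintegral_prod_right' (f := fun q => T q.1 * G (q.2 - q.1))
            (by fun_prop)
    _ < ⊤ := by
        rw [h₁, h₂]
        exact ENNReal.add_lt_top.2 ⟨ENNReal.mul_lt_top hTfin hGfin, ENNReal.mul_lt_top hTfin hGfin⟩

lemma integral_integral_seminormKernel_eq (hd : 1 ≤ d) {p s : ℝ} (hp : 1 ≤ p)
    (hs : s ∈ Set.Ioo (0 : ℝ) 1) (i j : Fin d) {u : EuclideanSpace ℝ (Fin d) → ℝ}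
    (hu : ContDiff ℝ 1 u) (hc : HasCompactSupport u) :
    ∫ x in halfSpace j, ∫ y in halfSpace j, seminormKernel p s i u x y =
      (∫⁻ x in halfSpace j, ∫⁻ y in halfSpace j,
        ENNReal.ofReal (seminormKernel p s i u x y)).toReal := by
  have hk := measurable_seminormKernel p s i hu.continuous.measurable
  have hinner : Measurable fun x =>
      ∫⁻ y in halfSpace j, ENNReal.ofReal (seminormKernel p s i u x y) :=
    Measurable.lintegral_prod_right'
      (f := fun q => ENNReal.ofReal (seminormKernel p s i u q.1 q.2)) hk.ennreal_ofReal
  rw [← integral_toReal hinner.aemeasurable (ae_lt_top hinner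
    (lintegral_lintegral_seminormKernel_lt_top hd hp hs i j hu hc).ne)]
  congr 1 with x
  exact integral_eq_lintegral_of_nonneg_ae
    (Filter.Eventually.of_forall fun y => seminormKernel_nonneg p s i u x y)
    (hk.comp measurable_prodMk_left).aestronglyMeasurable

end WeightedHardy

open WeightedHardy

/-- Scalar fractional Hardy-type inequality with the weight |y₁-x₁|^p/|y-x|^p:
∫ |u(x)|^p/x_d^{ps} dx ≤ κ ∫∫ |u(y)-u(x)|^p |y₁-x₁|^p / |y-x|^{d+ps+p} dy dx. -/
theorem scalar_hardy_weighted
    (d : ℕ) (hd : 1 ≤ d) (p s : ℝ) (hp : 1 ≤ p) (hs : s ∈ Set.Ioo (0 : ℝ) 1)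
    (hps : p * s ≠ 1) :
    ∃ κ : ℝ, 0 < κ ∧
      ∀ u : EuclideanSpace ℝ (Fin d) → ℝ,
        ContDiff ℝ 1 u → HasCompactSupport u →
        tsupport u ⊆ {x : EuclideanSpace ℝ (Fin d) | 0 < x ⟨d - 1, by omega⟩} →
        (∫ x in {x : EuclideanSpace ℝ (Fin d) | 0 < x ⟨d - 1, by omega⟩},
            |u x| ^ p / (x ⟨d - 1, by omega⟩) ^ (p * s)) ≤
          κ * ∫ x in {x : EuclideanSpace ℝ (Fin d) | 0 < x ⟨d - 1, by omega⟩},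
              ∫ y in {y : EuclideanSpace ℝ (Fin d) | 0 < y ⟨d - 1, by omega⟩},
                |u y - u x| ^ p * |y ⟨0, by omega⟩ - x ⟨0, by omega⟩| ^ p
                  / ‖y - x‖ ^ ((d : ℝ) + p * s + p) := by
  obtain ⟨κ, hκ, h⟩ := exists_lintegral_le_mul_lintegral_seminormKernel hp hs.1 hps
    (⟨0, by omega⟩ : Fin d) ⟨d - 1, by omega⟩
  refine ⟨κ, hκ, fun u hu hc _ => ?_⟩
  have hum : Measurable u := hu.continuous.measurable
  change ∫ x in halfSpace _, _ ≤ κ * ∫ x in halfSpace _, ∫ y in halfSpace _,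
    seminormKernel p s _ u x y
  rw [integral_integral_seminormKernel_eq hd hp hs _ _ hu hc, integral_eq_lintegral_of_nonneg_ae]
  · set K := ∫⁻ x in halfSpace _, ENNReal.ofReal (|u x| ^ p / x _ ^ (p * s))
    by_cases hfin : K = ⊤
    · rw [hfin, ENNReal.toReal_top]
      positivity
    · rw [← ENNReal.toReal_ofReal hκ.le, ← ENNReal.toReal_mul]
      exact ENNReal.toReal_mono (ENNReal.mul_ne_top ENNReal.ofReal_ne_top
        (lintegral_lintegral_seminormKernel_lt_top hd hp hs _ _ hu hc).ne) (h u hum hfin)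
  · refine (ae_restrict_mem (measurableSet_halfSpace _)).mono fun x hx => ?_
    exact div_nonneg (by positivity) (Real.rpow_nonneg (mem_halfSpace.1 hx).le _)
  · exact Measurable.aestronglyMeasurable (by fun_prop)
end
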